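/- Let 0 < a < 1, b = 0 and c > 0, and let y be a 2π-periodic solution of y′(x) = c·cos x·y(x)² + (sin x − a)·y(x)³ with y(x) > 0 for all x. Then ∫₀^{2π} cos x · y(x) dx < 0; equivalently, ∫₀^{2π} (2c·cos x·y(x) + 3(sin x − a)·y(x)²) dx > 0, so every such periodic solution is hyperbolic and unstable. -/

import Mathlib

open Real

/-!
The map `u = 1 / y` turns `y′ = A y² + B y³` into `u′ = -(A + B y)`. If `A` is odd and `B` even
under the reflection `x ↦ p - x`, then `z(x) = y(p - x)` solves the equation with `B` replaced by
`-B`, so `1 / y - 1 / z` has derivative `-B (y + z)`. It vanishes at both ends of a half period on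
which `B` is increasing, hence is positive inside: there `y < z`. If moreover `A > 0` on this half
period, folding `∫ A y` along the reflection gives `∫ A (y - z) < 0`, and since
`(log y)′ = A y + B y²` has mean zero, `∫ (2 A y + 3 B y²) = -∫ A y > 0`.
-/

open Set intervalIntegral

theorem pos_of_hasDerivAt_mul_of_strictAntiOn {w g h : ℝ → ℝ} {l r : ℝ}
    (hw_cont : ContinuousOn w (Icc l r)) (hw : ∀ x ∈ Ioo l r, HasDerivAt w (g x * h x) x)
    (hg : StrictAntiOn g (Ioo l r)) (hh : ∀ x ∈ Ioo l r, 0 < h x)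
    (hl : w l = 0) (hr : w r = 0) {x : ℝ} (hx : x ∈ Ioo l r) : 0 < w x := by
  by_contra! hwx
  have hleft : Ioo l x ⊆ Ioo l r := Ioo_subset_Ioo_right hx.2.le
  have hright : Ioo x r ⊆ Ioo l r := Ioo_subset_Ioo_left hx.1.le
  obtain ⟨ξ, hξ, hξ_slope⟩ := exists_hasDerivAt_eq_slope w _ hx.1
    (hw_cont.mono (Icc_subset_Icc_right hx.2.le)) fun t ht ↦ hw t (hleft ht)
  obtain ⟨η, hη, hη_slope⟩ := exists_hasDerivAt_eq_slope w _ hx.2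
    (hw_cont.mono (Icc_subset_Icc_left hx.1.le)) fun t ht ↦ hw t (hright ht)
  have hgξ : g ξ ≤ 0 := by
    refine nonpos_of_mul_nonpos_left ?_ (hh ξ (hleft hξ))
    rw [hξ_slope, hl, sub_zero]
    exact div_nonpos_of_nonpos_of_nonneg hwx (sub_pos.2 hx.1).le
  have hgη : 0 ≤ g η := by
    refine nonneg_of_mul_nonneg_left ?_ (hh η (hright hη))
    rw [hη_slope, hr, zero_sub]
    exact div_nonneg (neg_nonneg.2 hwx) (sub_pos.2 hx.2).le
  have hlt : g η < g ξ := hg (hleft hξ) (hright hη) (hξ.2.trans hη.1)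
  exact (hgη.trans_lt hlt).not_ge hgξ

theorem integral_period_eq_integral_add_reflect {E : Type*} [NormedAddCommGroup E]
    [NormedSpace ℝ E] {f : ℝ → E} {T : ℝ} (hf : Continuous f) (hT : Function.Periodic f T)
    (p : ℝ) : ∫ x in (0 : ℝ)..T, f x = ∫ x in ((p - T) / 2)..(p / 2), (f x + f (p - x)) := by
  have hint (s t : ℝ) : IntervalIntegrable f MeasureTheory.volume s t := hf.intervalIntegrable s t
  have hreflect : ∫ x in ((p - T) / 2)..(p / 2), f (p - x) =
      ∫ x in (p / 2)..((p - T) / 2 + T), f x := by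
    rw [integral_comp_sub_left, sub_half]
    congr 1
    ring
  calc ∫ x in (0 : ℝ)..T, f x = ∫ x in ((p - T) / 2)..((p - T) / 2 + T), f x := by
        simpa only [zero_add] using hT.intervalIntegral_add_eq 0 ((p - T) / 2)
    _ = (∫ x in ((p - T) / 2)..(p / 2), f x) + ∫ x in ((p - T) / 2)..(p / 2), f (p - x) := by
        rw [hreflect, integral_add_adjacent_intervals (hint _ _) (hint _ _)]
    _ = ∫ x in ((p - T) / 2)..(p / 2), (f x + f (p - x)) :=
        (integral_add (hint _ _) (Continuous.intervalIntegrable (by fun_prop) _ _)).symm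

/-- `y` is a solution on all of `ℝ` of the Abel equation `y′ = A y² + B y³`. -/
def IsAbelSolution (A B y : ℝ → ℝ) : Prop :=
  ∀ x, HasDerivAt y (A x * y x ^ 2 + B x * y x ^ 3) x

namespace IsAbelSolution

variable {A B y z : ℝ → ℝ} {p T : ℝ}

theorem continuous (hy : IsAbelSolution A B y) : Continuous y :=
  continuous_iff_continuousAt.2 fun x ↦ (hy x).continuousAt

theorem hasDerivAt_inv (hy : IsAbelSolution A B y) {x : ℝ} (hx : y x ≠ 0) :
    HasDerivAt (fun t ↦ (y t)⁻¹) (-(A x + B x * y x)) x := by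
  refine ((hy x).fun_inv hx).congr_deriv ?_
  field_simp

theorem hasDerivAt_log (hy : IsAbelSolution A B y) {x : ℝ} (hx : y x ≠ 0) :
    HasDerivAt (fun t ↦ log (y t)) (A x * y x + B x * y x ^ 2) x := by
  refine ((hy x).log hx).congr_deriv ?_
  field_simp

theorem reflect (hy : IsAbelSolution A B y) (hA : ∀ x, A (p - x) = -A x)
    (hB : ∀ x, B (p - x) = B x) : IsAbelSolution A (fun x ↦ -B x) (fun x ↦ y (p - x)) := by
  intro x
  refine ((hy (p - x)).comp_const_sub p x).congr_deriv ?_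
  rw [hA, hB]
  ring

theorem lt_of_strictMonoOn (hy : IsAbelSolution A B y) (hz : IsAbelSolution A (fun x ↦ -B x) z)
    (hy_pos : ∀ x, 0 < y x) (hz_pos : ∀ x, 0 < z x) {l r : ℝ} (hB : StrictMonoOn B (Ioo l r))
    (hl : y l = z l) (hr : y r = z r) {x : ℝ} (hx : x ∈ Ioo l r) : y x < z x := by
  have hderiv (t : ℝ) : HasDerivAt (fun t ↦ (y t)⁻¹ - (z t)⁻¹) (-B t * (y t + z t)) t := by
    refine ((hy.hasDerivAt_inv (hy_pos t).ne').sub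
      (hz.hasDerivAt_inv (hz_pos t).ne')).congr_deriv ?_
    ring
  have hinv : 0 < (y x)⁻¹ - (z x)⁻¹ :=
    pos_of_hasDerivAt_mul_of_strictAntiOn
      (fun t _ ↦ (hderiv t).continuousAt.continuousWithinAt) (fun t _ ↦ hderiv t) hB.neg
      (fun t _ ↦ add_pos (hy_pos t) (hz_pos t)) (by rw [hl, sub_self]) (by rw [hr, sub_self]) hx
  exact (inv_lt_inv₀ (hz_pos x) (hy_pos x)).1 (sub_pos.1 hinv)

theorem lt_reflect (hy : IsAbelSolution A B y) (hpos : ∀ x, 0 < y x)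
    (hper : Function.Periodic y T) (hA : ∀ x, A (p - x) = -A x) (hB : ∀ x, B (p - x) = B x)
    (hB_mono : StrictMonoOn B (Ioo ((p - T) / 2) (p / 2))) {x : ℝ}
    (hx : x ∈ Ioo ((p - T) / 2) (p / 2)) : y x < y (p - x) := by
  refine hy.lt_of_strictMonoOn (hy.reflect hA hB) hpos (fun t ↦ hpos (p - t)) hB_mono ?_ ?_ hx
  · rw [← hper]
    congr 1
    ring
  · rw [sub_half]

theorem integral_mul_neg (hy : IsAbelSolution A B y) (hpos : ∀ x, 0 < y x)
    (hper : Function.Periodic y T) (hT : 0 < T) (hA_cont : Continuous A)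
    (hA_per : Function.Periodic A T) (hA : ∀ x, A (p - x) = -A x) (hB : ∀ x, B (p - x) = B x)
    (hA_pos : ∀ x ∈ Ioo ((p - T) / 2) (p / 2), 0 < A x)
    (hB_mono : StrictMonoOn B (Ioo ((p - T) / 2) (p / 2))) :
    ∫ x in (0 : ℝ)..T, A x * y x < 0 := by
  have hy_cont := hy.continuous
  have hfold : ∫ x in (0 : ℝ)..T, A x * y x =
      -∫ x in ((p - T) / 2)..(p / 2), A x * (y (p - x) - y x) := by
    rw [integral_period_eq_integral_add_reflect (f := fun x ↦ A x * y x) (by fun_prop)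
      (hA_per.mul hper) p, ← integral_neg]
    refine integral_congr fun x _ ↦ ?_
    simp only [hA]
    ring
  rw [hfold, neg_lt_zero]
  refine intervalIntegral_pos_of_pos_on (Continuous.intervalIntegrable (by fun_prop) _ _)
    (fun x hx ↦ mul_pos (hA_pos x hx) (sub_pos.2 ?_)) (by linarith)
  exact hy.lt_reflect hpos hper hA hB hB_mono hx

theorem integral_linearization_eq_neg (hy : IsAbelSolution A B y) (hy_ne : ∀ x, y x ≠ 0)
    (hA : Continuous A) (hB : Continuous B) {s t : ℝ} (hst : y s = y t) :
    ∫ x in s..t, (2 * A x * y x + 3 * B x * y x ^ 2) = -∫ x in s..t, A x * y x := by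
  have hy_cont := hy.continuous
  have hlog : ∫ x in s..t, (A x * y x + B x * y x ^ 2) = 0 := by
    rw [integral_eq_sub_of_hasDerivAt (fun x _ ↦ hy.hasDerivAt_log (hy_ne x))
      (Continuous.intervalIntegrable (by fun_prop) _ _), hst, sub_self]
  calc ∫ x in s..t, (2 * A x * y x + 3 * B x * y x ^ 2)
      = ∫ x in s..t, (3 * (A x * y x + B x * y x ^ 2) - A x * y x) :=
        integral_congr fun x _ ↦ by ring
    _ = 3 * (∫ x in s..t, (A x * y x + B x * y x ^ 2)) - ∫ x in s..t, A x * y x := by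
        rw [integral_sub (Continuous.intervalIntegrable (by fun_prop) _ _)
          (Continuous.intervalIntegrable (by fun_prop) _ _), integral_const_mul]
    _ = -∫ x in s..t, A x * y x := by rw [hlog, mul_zero, zero_sub]

end IsAbelSolution

/-- For `0 < a < 1`, `b = 0`, `c > 0`, every positive 2π-periodic solution of
`y′ = c·cos x·y² + (sin x − a)·y³` satisfies `∫₀^{2π} cos x · y(x) dx < 0`,
equivalently `∫₀^{2π} (2c·cos x·y + 3(sin x − a)·y²) dx > 0`, hence is
hyperbolic and unstable. -/
theorem abel_positive_periodic_solution_unstable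
    (a c : ℝ) (ha0 : 0 < a) (ha1 : a < 1) (hc : 0 < c)
    (y : ℝ → ℝ)
    (hsol : ∀ x : ℝ, HasDerivAt y
      (c * Real.cos x * (y x) ^ 2 + (Real.sin x - a) * (y x) ^ 3) x)
    (hper : ∀ x : ℝ, y (x + 2 * Real.pi) = y x)
    (hpos : ∀ x : ℝ, 0 < y x) :
    (∫ x in (0:ℝ)..(2 * Real.pi), Real.cos x * y x) < 0 ∧
    0 < ∫ x in (0:ℝ)..(2 * Real.pi),
      (2 * c * Real.cos x * y x + 3 * (Real.sin x - a) * (y x) ^ 2) := by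
  have hy : IsAbelSolution (fun x ↦ c * cos x) (fun x ↦ sin x - a) y := hsol
  have hl : (π - 2 * π) / 2 = -(π / 2) := by ring
  have hneg : ∫ x in (0 : ℝ)..(2 * π), c * cos x * y x < 0 := by
    refine hy.integral_mul_neg (p := π) hpos hper two_pi_pos (by fun_prop)
      (fun x ↦ by simp only [cos_add_two_pi]) (fun x ↦ by rw [cos_pi_sub, mul_neg])
      (fun x ↦ by rw [sin_pi_sub]) ?_ ?_ <;> rw [hl]
    · exact fun x hx ↦ mul_pos hc (cos_pos_of_mem_Ioo hx)
    · exact (strictMonoOn_sin.mono Ioo_subset_Icc_self).add_const (-a)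
  have hlin := hy.integral_linearization_eq_neg (fun x ↦ (hpos x).ne') (by fun_prop)
    (by fun_prop) (s := 0) (t := 2 * π) (by rw [← hper 0, zero_add])
  constructor
  · simp only [mul_assoc, integral_const_mul] at hneg
    exact neg_of_mul_neg_right hneg hc.le
  · simp only [← mul_assoc] at hlin
    rwa [hlin, neg_pos]
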